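/- Let Z_t = {1,…,t} ∪ {1̄,…,t̄} and T the involution exchanging j and j̄. Suppose a permutation ϖ of Z_t admits two factorizations ϖ = T′₁ ∘ π_{o1} ∘ π_{e1} ∘ T″₁ = T′₂ ∘ π_{o2} ∘ π_{e2} ∘ T″₂, where in each factorization π_o fixes every barred element, π_e fixes every unbarred element, and T′, T″ are involutions with T′(z), T″(z) ∈ {z, T(z)} for all z. Then the permutations T ∘ π_{e1}⁻¹ ∘ T ∘ π_{o1} and T ∘ π_{e2}⁻¹ ∘ T ∘ π_{o2} have the same cycle type; i.e., the cycle type of T ∘ π_e⁻¹ ∘ T ∘ π_o does not depend on the choice of the factorization. -/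

import Mathlib

/-!
Write `σ = T πe⁻¹ T πo`. The idea is to express the cycle type of `σ` through `ϖ` and `T` alone:
the commutator-like permutation `T ϖ⁻¹ T ϖ` has cycle type twice that of `σ`
(`cycleType_twisted`).

Indeed `T'` and `T''` commute with `T`, so `T'` cancels and
`T ϖ⁻¹ T ϖ = T'' (T πe⁻¹ πo⁻¹ T πo πe) T''` is conjugate to `T πe⁻¹ πo⁻¹ T πo πe`.
Since `πo` and `T πo⁻¹ T` have disjoint supports they commute, and the latter permutation equals
`σ * (T σ⁻¹ T)`. Here `σ` moves only unbarred elements and `T σ⁻¹ T` only barred ones, and both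
have the cycle type of `σ`.
-/

/-- An involution preserving every pair `{z, T z}` commutes with the involution `T`. -/
theorem commute_of_preserves_pairs {α : Type*} (T S : Equiv.Perm α) (hT : T * T = 1)
    (hSinv : S * S = 1) (hS : ∀ z, S z = z ∨ S z = T z) : S * T = T * S := by
  have hTT : ∀ z, T (T z) = z := fun z => by simpa using congrArg (fun f => f z) hT
  have hSS : ∀ z, S (S z) = z := fun z => by simpa using congrArg (fun f => f z) hSinv
  ext z
  change S (T z) = T (S z)
  rcases hS z with h | h
  · rw [h]
    rcases hS (T z) with h2 | h2
    · exact h2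
    · rw [hTT] at h2
      -- here `S` sends both `z` and `T z` to `z`, so `T z = z`
      have : T z = z := S.injective (h2.trans h.symm)
      rw [this, h]
  · rw [h, hTT, ← h, hSS]

/-- The cycle type of `T πe⁻¹ T πo` is determined by `ϖ`: doubled, it is the cycle type of
`T ϖ⁻¹ T ϖ`. -/
theorem cycleType_twisted (t : ℕ) (T ϖ T' T'' πo πe : Equiv.Perm (Fin t ⊕ Fin t))
    (hT : T = Equiv.sumComm (Fin t) (Fin t))
    (hπo : ∀ j : Fin t, πo (Sum.inr j) = Sum.inr j)
    (hπe : ∀ j : Fin t, πe (Sum.inl j) = Sum.inl j)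
    (hT'inv : T' * T' = 1) (hT''inv : T'' * T'' = 1)
    (hT' : ∀ z, T' z = z ∨ T' z = T z)
    (hT'' : ∀ z, T'' z = z ∨ T'' z = T z)
    (hfact : ϖ = T' * πo * πe * T'') :
    (T * ϖ⁻¹ * T * ϖ).cycleType = 2 • (T * πe⁻¹ * T * πo).cycleType := by
  have hTl : ∀ j, T (Sum.inl j) = Sum.inr j := fun j => by rw [hT]; rfl
  have hTr : ∀ j, T (Sum.inr j) = Sum.inl j := fun j => by rw [hT]; rfl
  have hTT : T * T = 1 := by ext z; rcases z with j | j <;> simp [hTl, hTr]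
  have hTi : T⁻¹ = T := inv_eq_of_mul_eq_one_left hTT
  have hT'i : T'⁻¹ = T' := inv_eq_of_mul_eq_one_left hT'inv
  have hT''i : T''⁻¹ = T'' := inv_eq_of_mul_eq_one_left hT''inv
  have hc' := commute_of_preserves_pairs T T' hTT hT'inv hT'
  have hc'' := commute_of_preserves_pairs T T'' hTT hT''inv hT''
  have hπo' : ∀ j : Fin t, πo⁻¹ (Sum.inr j) = Sum.inr j := fun j => by
    rw [Equiv.Perm.inv_eq_iff_eq, hπo]
  have hπe' : ∀ j : Fin t, πe⁻¹ (Sum.inl j) = Sum.inl j := fun j => by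
    rw [Equiv.Perm.inv_eq_iff_eq, hπe]
  set σ := T * πe⁻¹ * T * πo with hσ
  have hσr : ∀ j : Fin t, σ (Sum.inr j) = Sum.inr j := fun j => by
    simp only [hσ, Equiv.Perm.mul_apply, hπo, hTr, hπe', hTl]
  have hσr' : ∀ j : Fin t, σ⁻¹ (Sum.inr j) = Sum.inr j := fun j => by
    rw [Equiv.Perm.inv_eq_iff_eq, hσr]
  have hdisj : σ.Disjoint (T * σ⁻¹ * T⁻¹) := by
    rintro (j | j)
    · right
      simp only [hTi, Equiv.Perm.mul_apply, hTl, hσr', hTr]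
    · exact Or.inl (hσr j)
  have hcomm : (T * πo⁻¹ * T) * πo = πo * (T * πo⁻¹ * T) := by
    refine (Equiv.Perm.Disjoint.commute ?_).eq
    rintro (j | j)
    · left
      simp only [Equiv.Perm.mul_apply, hTl, hπo', hTr]
    · exact Or.inr (hπo j)
  have hconj : T * ϖ⁻¹ * T * ϖ = T'' * (σ * (T * σ⁻¹ * T⁻¹)) * T''⁻¹ := by
    calc T * ϖ⁻¹ * T * ϖ
        = (T * T'') * πe⁻¹ * πo⁻¹ * (T' * T) * T' * πo * πe * T'' := by
          rw [hfact]
          simp only [mul_inv_rev, hT'i, hT''i, mul_assoc]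
      _ = T'' * T * πe⁻¹ * πo⁻¹ * T * (T' * T') * πo * πe * T'' := by
          rw [hc', ← hc'']
          simp only [mul_assoc]
      _ = T'' * T * πe⁻¹ * (T * T) * πo⁻¹ * T * πo * πe * T'' := by
          rw [hT'inv, hTT]
          simp only [mul_one]
      _ = T'' * T * πe⁻¹ * T * ((T * πo⁻¹ * T) * πo) * πe * T'' := by
          simp only [mul_assoc]
      _ = T'' * (σ * (T * σ⁻¹ * T⁻¹)) * T''⁻¹ := by
          rw [hcomm, hσ, hT''i]
          simp only [mul_inv_rev, hTi, inv_inv, mul_assoc]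
          rw [← mul_assoc T T T'', hTT, one_mul]
  rw [hconj, Equiv.Perm.cycleType_conj, hdisj.cycleType_mul, Equiv.Perm.cycleType_conj,
    Equiv.Perm.cycleType_inv, two_nsmul]

/-- On `Z_t = {1,…,t} ∪ {1̄,…,t̄}` (encoded as `Fin t ⊕ Fin t`) with `T`
the involution exchanging `j` and `j̄` (encoded as `Equiv.sumComm`), if a permutation `ϖ`
admits two Brouwer–Beenakker factorizations `ϖ = T′ᵢ ∘ π_{oi} ∘ π_{ei} ∘ T″ᵢ` (`i = 1, 2`),
where each `π_{oi}` fixes every barred element, each `π_{ei}` fixes every unbarred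
element, and `T′ᵢ, T″ᵢ` are involutions with `T′ᵢ z, T″ᵢ z ∈ {z, T z}`, then
`T ∘ π_{e1}⁻¹ ∘ T ∘ π_{o1}` and `T ∘ π_{e2}⁻¹ ∘ T ∘ π_{o2}` have the same cycle type. -/
theorem factorization_cycle_type_well_defined (t : ℕ)
    (T ϖ T'₁ T''₁ πo₁ πe₁ T'₂ T''₂ πo₂ πe₂ : Equiv.Perm (Fin t ⊕ Fin t))
    (hT : T = Equiv.sumComm (Fin t) (Fin t))
    (hπo₁ : ∀ j : Fin t, πo₁ (Sum.inr j) = Sum.inr j)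
    (hπe₁ : ∀ j : Fin t, πe₁ (Sum.inl j) = Sum.inl j)
    (hT'₁inv : T'₁ * T'₁ = 1) (hT''₁inv : T''₁ * T''₁ = 1)
    (hT'₁ : ∀ z, T'₁ z = z ∨ T'₁ z = T z)
    (hT''₁ : ∀ z, T''₁ z = z ∨ T''₁ z = T z)
    (hπo₂ : ∀ j : Fin t, πo₂ (Sum.inr j) = Sum.inr j)
    (hπe₂ : ∀ j : Fin t, πe₂ (Sum.inl j) = Sum.inl j)
    (hT'₂inv : T'₂ * T'₂ = 1) (hT''₂inv : T''₂ * T''₂ = 1)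
    (hT'₂ : ∀ z, T'₂ z = z ∨ T'₂ z = T z)
    (hT''₂ : ∀ z, T''₂ z = z ∨ T''₂ z = T z)
    (hfact₁ : ϖ = T'₁ * πo₁ * πe₁ * T''₁)
    (hfact₂ : ϖ = T'₂ * πo₂ * πe₂ * T''₂) :
    (T * πe₁⁻¹ * T * πo₁).cycleType = (T * πe₂⁻¹ * T * πo₂).cycleType := by
  have h₁ := cycleType_twisted t T ϖ T'₁ T''₁ πo₁ πe₁ hT hπo₁ hπe₁ hT'₁inv hT''₁inv hT'₁ hT''₁ hfact₁
  have h₂ := cycleType_twisted t T ϖ T'₂ T''₂ πo₂ πe₂ hT hπo₂ hπe₂ hT'₂inv hT''₂inv hT'₂ hT''₂ hfact₂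
  have h := h₁.symm.trans h₂
  ext n
  have hn := congrArg (Multiset.count n) h
  simp only [Multiset.count_nsmul] at hn
  omega
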